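/- arXiv:2109.07398 — 2 statements merged into one kernel-verified Lean document; each statement's English description precedes it below -/
import Mathlib

section
/- Let λ ∈ ℝ with λ ≠ −1, and let γ₀ : ℝ² → ℝ be continuous, 2π-periodic in each variable, with torus mean ⟨γ₀⟩ = 0 and γ₀ not identically zero. Set γ₊ := max γ₀ and γ₋ := min γ₀ over [0,2π]², S* := −1/((λ+1)γ₊) if λ < −1 and S* := −1/((λ+1)γ₋) if λ > −1 (so S* > 0), and for S ∈ [0,S*) define G(S) := ⟨(1 + (λ+1)γ₀S)^{−1/(λ+1)}⟩^{−2(λ+1)}. Suppose S : [0,T) → ℝ is differentiable with S'(t) = G(S(t)) and 0 ≤ S(t) < S* for all t. Then S' is differentiable on [0,T) and S''(t) = 2(λ+1)·S'(t)^{2 + 1/(2(λ+1))}·⟨γ₀·(1 + (λ+1)γ₀S(t))^{−(λ+2)/(λ+1)}⟩ for all t ∈ [0,T). -/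
open Real MeasureTheory

/-- The average of a `2π`-biperiodic function over the torus `[0,2π]²`. -/
noncomputable def tavg (f : ℝ × ℝ → ℝ) : ℝ :=
  (∫ p in Set.Icc (0:ℝ) (2*π) ×ˢ Set.Icc (0:ℝ) (2*π), f p) / (4 * π ^ 2)

/-!
Write `F s = ⟨(1 + (λ+1) γ₀ s) ^ (-1/(λ+1))⟩`. Below `S*` the base is bounded away from `0` on the
compact square, so differentiation under the integral sign gives
`F' s = -⟨γ₀ (1 + (λ+1) γ₀ s) ^ (-(λ+2)/(λ+1))⟩`. Since `S' = F(S) ^ (-2(λ+1))` with `F(S) > 0`, the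
chain rule gives `S'' = -2(λ+1) F(S) ^ (-2(λ+1) - 1) F'(S) S'`, and the powers of `F(S)` combine
so that `S'` appears to the power `2 + 1/(2(λ+1))`.
-/

section CompactSet

open scoped Topology

variable {X : Type*} [TopologicalSpace X] {K : Set X}

theorem eventually_forall_one_add_mul_pos (hK : IsCompact K) {g : X → ℝ} (hg : ContinuousOn g K)
    {s₀ : ℝ} (hpos : ∀ p ∈ K, 0 < 1 + g p * s₀) :
    ∀ᶠ s in 𝓝 s₀, ∀ p ∈ K, 0 < 1 + g p * s := by
  have himage : ∀ᶠ s in 𝓝 s₀, ∀ c ∈ g '' K, 0 < 1 + c * s := by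
    refine (hK.image_of_continuousOn hg).eventually_forall_of_forall_eventually ?_
    rintro _ ⟨p, hp, rfl⟩
    have hcont : Continuous fun z : ℝ × ℝ => 1 + z.2 * z.1 := by fun_prop
    exact hcont.continuousAt.eventually (lt_mem_nhds (hpos p hp))
  simpa only [Set.forall_mem_image] using himage

variable [T2Space X] [MeasurableSpace X] [OpensMeasurableSpace X] {μ : Measure X}
  [IsFiniteMeasureOnCompacts μ]

theorem hasDerivAt_setIntegral_of_continuousOn_deriv {𝕜 E : Type*} [RCLike 𝕜] [NormedAddCommGroup E]
    [NormedSpace ℝ E] [NormedSpace 𝕜 E] (hK : IsCompact K) {F F' : 𝕜 → X → E} {U : Set 𝕜} {s₀ : 𝕜}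
    (hU : U ∈ 𝓝 s₀) (hF : ∀ s ∈ U, ContinuousOn (F s) K)
    (hF' : ContinuousOn (Function.uncurry F') (U ×ˢ K))
    (hderiv : ∀ s ∈ U, ∀ p ∈ K, HasDerivAt (F · p) (F' s p) s) :
    HasDerivAt (fun s => ∫ p in K, F s p ∂μ) (∫ p in K, F' s₀ p ∂μ) s₀ := by
  obtain ⟨V, hV, hVU, hVc⟩ := local_compact_nhds hU
  obtain ⟨B, hB⟩ := (hVc.prod hK).exists_bound_of_continuousOn (hF'.mono (Set.prod_mono_left hVU))
  have hF's₀ : ContinuousOn (F' s₀) K :=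
    hF'.comp (f := fun p => (s₀, p)) (by fun_prop) fun p hp => ⟨mem_of_mem_nhds hU, hp⟩
  have hKm := hK.measurableSet
  refine (hasDerivAt_integral_of_dominated_loc_of_deriv_le (bound := fun _ => B) hV
    ?_ ?_ ?_ ?_ ?_ ?_).2
  · filter_upwards [hU] with s hs
    exact (hF s hs).aestronglyMeasurable_of_isCompact hK hKm
  · exact (hF s₀ (mem_of_mem_nhds hU)).integrableOn_compact hK
  · exact hF's₀.aestronglyMeasurable_of_isCompact hK hKm
  · filter_upwards [ae_restrict_mem hKm] with p hp s hs
    exact hB (s, p) ⟨hs, hp⟩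
  · exact continuousOn_const.integrableOn_compact hK
  · filter_upwards [ae_restrict_mem hKm] with p hp s hs
    exact hderiv s (hVU hs) p hp

theorem hasDerivAt_setAverage_one_add_mul_rpow (hK : IsCompact K) {g : X → ℝ}
    (hg : ContinuousOn g K) (r : ℝ) {s₀ : ℝ} (hpos : ∀ p ∈ K, 0 < 1 + g p * s₀) :
    HasDerivAt (fun s => ⨍ p in K, (1 + g p * s) ^ r ∂μ)
      (⨍ p in K, g p * r * (1 + g p * s₀) ^ (r - 1) ∂μ) s₀ := by
  set U : Set ℝ := {s | ∀ p ∈ K, 0 < 1 + g p * s}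
  have hU : U ∈ 𝓝 s₀ := eventually_forall_one_add_mul_pos hK hg hpos
  have hF : ∀ s ∈ U, ContinuousOn (fun p => (1 + g p * s) ^ r) K := fun s hs =>
    ContinuousOn.rpow_const (by fun_prop) fun p hp => Or.inl (hs p hp).ne'
  have hg₂ : ContinuousOn (fun z : ℝ × X => g z.2) (U ×ˢ K) :=
    hg.comp continuousOn_snd fun _ hz => hz.2
  have hF' : ContinuousOn (Function.uncurry fun s p => g p * r * (1 + g p * s) ^ (r - 1))
      (U ×ˢ K) :=
    (hg₂.mul continuousOn_const).mul <| ContinuousOn.rpow_const (by fun_prop) fun z hz =>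
      Or.inl (hz.1 z.2 hz.2).ne'
  have hderiv : ∀ s ∈ U, ∀ p ∈ K,
      HasDerivAt (fun s => (1 + g p * s) ^ r) (g p * r * (1 + g p * s) ^ (r - 1)) s :=
    fun s hs p hp => ((hasDerivAt_const_mul (g p)).const_add 1).rpow_const (Or.inl (hs p hp).ne')
  simpa only [setAverage_eq] using
    (hasDerivAt_setIntegral_of_continuousOn_deriv hK hU hF hF' hderiv).fun_const_smul (μ.real K)⁻¹

theorem setAverage_pos_of_isCompact (hK : IsCompact K) (hμK : μ K ≠ 0) {f : X → ℝ}
    (hf : ContinuousOn f K) (hpos : ∀ p ∈ K, 0 < f p) : 0 < ⨍ p in K, f p ∂μ := by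
  obtain ⟨p, hp, hle⟩ :=
    exists_le_setAverage hμK hK.measure_lt_top.ne (hf.integrableOn_compact hK)
  exact (hpos p hp).trans_le hle

theorem stmt14_general (hK : IsCompact K) (hμK : μ K ≠ 0) {lam : ℝ} (hlam : lam ≠ -1)
    {γ0 : X → ℝ} (hγ0 : ContinuousOn γ0 K) {I : Set ℝ} {S S' : ℝ → ℝ} {t : ℝ} (ht : t ∈ I)
    (hS : HasDerivWithinAt S (S' t) I t)
    (hS' : ∀ u ∈ I, S' u =
      (⨍ p in K, (1 + (lam + 1) * γ0 p * S u) ^ (-1 / (lam + 1)) ∂μ) ^ (-(2 * (lam + 1))))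
    (hpos : ∀ p ∈ K, 0 < 1 + (lam + 1) * γ0 p * S t) :
    HasDerivWithinAt S'
      (2 * (lam + 1) * S' t ^ (2 + 1 / (2 * (lam + 1)))
        * ⨍ p in K, γ0 p * (1 + (lam + 1) * γ0 p * S t) ^ (-(lam + 2) / (lam + 1)) ∂μ) I t := by
  have ha : lam + 1 ≠ 0 := fun h => hlam (by linarith)
  have hg : ContinuousOn (fun p => (lam + 1) * γ0 p) K := by fun_prop
  set F : ℝ → ℝ := fun s => ⨍ p in K, (1 + (lam + 1) * γ0 p * s) ^ (-1 / (lam + 1)) ∂μ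
  set A : ℝ := ⨍ p in K, γ0 p * (1 + (lam + 1) * γ0 p * S t) ^ (-(lam + 2) / (lam + 1)) ∂μ
  have hF : HasDerivAt F (-A) (S t) := by
    refine (hasDerivAt_setAverage_one_add_mul_rpow hK hg (-1 / (lam + 1)) hpos).congr_deriv ?_
    have hexp : -1 / (lam + 1) - 1 = -(lam + 2) / (lam + 1) := by field_simp; ring
    have hcoef (c : ℝ) : (lam + 1) * c * (-1 / (lam + 1)) = -c := by field_simp
    simp only [hexp, hcoef, neg_mul, average_neg, A]
  have hFpos : 0 < F (S t) := setAverage_pos_of_isCompact hK hμK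
    (ContinuousOn.rpow_const (by fun_prop) fun p hp => Or.inl (hpos p hp).ne')
    fun p hp => rpow_pos_of_pos (hpos p hp) _
  have hpow : S' t ^ (2 + 1 / (2 * (lam + 1))) = S' t * F (S t) ^ (-(2 * (lam + 1)) - 1) := by
    rw [hS' t ht, ← rpow_mul hFpos.le, ← rpow_add hFpos]
    congr 1
    field_simp
    ring
  refine (((hF.comp_hasDerivWithinAt t hS).rpow_const (Or.inl hFpos.ne')).congr_of_mem hS'
    ht).congr_deriv ?_
  rw [hpow, Function.comp_apply]
  ring

end CompactSet

theorem one_add_mul_pos_of_lt_neg_one_div {c m s : ℝ} (hmc : m ≤ c) (hs₀ : 0 ≤ s)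
    (hs : s < -1 / m) : 0 < 1 + c * s := by
  have hm : m < 0 := by
    by_contra! hm
    exact (hs₀.trans_lt hs).not_ge (div_nonpos_of_nonpos_of_nonneg (by norm_num) hm)
  have hms : -1 < s * m := (lt_div_iff_of_neg hm).mp hs
  nlinarith [mul_le_mul_of_nonneg_right hmc hs₀]

theorem one_add_mul_pos_of_lt_ite {lam γp γm c s : ℝ} (hcp : c ≤ γp) (hcm : γm ≤ c) (hs₀ : 0 ≤ s)
    (hs : s < if lam < -1 then -1 / ((lam + 1) * γp) else -1 / ((lam + 1) * γm)) :
    0 < 1 + (lam + 1) * c * s := by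
  split_ifs at hs with hlam
  · exact one_add_mul_pos_of_lt_neg_one_div
      (mul_le_mul_of_nonpos_left hcp (by linarith)) hs₀ hs
  · exact one_add_mul_pos_of_lt_neg_one_div
      (mul_le_mul_of_nonneg_left hcm (by linarith)) hs₀ hs

theorem volume_Icc_prod_Icc_two_pi :
    volume (Set.Icc (0 : ℝ) (2 * π) ×ˢ Set.Icc (0 : ℝ) (2 * π)) = ENNReal.ofReal (4 * π ^ 2) := by
  rw [Measure.volume_eq_prod, Measure.prod_prod, Real.volume_Icc, sub_zero,
    ← ENNReal.ofReal_mul (by positivity)]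
  ring_nf

theorem tavg_eq_setAverage (f : ℝ × ℝ → ℝ) :
    tavg f = ⨍ p in Set.Icc (0 : ℝ) (2 * π) ×ˢ Set.Icc (0 : ℝ) (2 * π), f p := by
  rw [tavg, setAverage_eq, measureReal_def, volume_Icc_prod_Icc_two_pi,
    ENNReal.toReal_ofReal (by positivity), smul_eq_mul, div_eq_inv_mul]

/-- the second derivative of the auxiliary function `S` solving
`S' = G(S)` with `G(S) = ⟨(1+(λ+1)γ₀S)^(−1/(λ+1))⟩^(−2(λ+1))`:
`S'' = 2(λ+1) S'^(2+1/(2(λ+1))) ⟨γ₀ (1+(λ+1)γ₀S)^(−(λ+2)/(λ+1))⟩`. -/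
theorem stmt14 (lam : ℝ) (hlam : lam ≠ -1)
    (γ0 : ℝ × ℝ → ℝ) (hcont : Continuous γ0)
    (hper1 : ∀ y : ℝ, Function.Periodic (fun x => γ0 (x, y)) (2*π))
    (hper2 : ∀ x : ℝ, Function.Periodic (fun y => γ0 (x, y)) (2*π))
    (hmean : tavg γ0 = 0) (hne : γ0 ≠ 0)
    (γp γm : ℝ)
    (hγp : IsGreatest (γ0 '' (Set.Icc (0:ℝ) (2*π) ×ˢ Set.Icc (0:ℝ) (2*π))) γp)
    (hγm : IsLeast (γ0 '' (Set.Icc (0:ℝ) (2*π) ×ˢ Set.Icc (0:ℝ) (2*π))) γm)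
    (Sstar : ℝ)
    (hSstar : Sstar = if lam < -1 then -1 / ((lam + 1) * γp) else -1 / ((lam + 1) * γm))
    (G : ℝ → ℝ)
    (hG : ∀ s ∈ Set.Ico 0 Sstar,
      G s = (tavg fun p => (1 + (lam + 1) * γ0 p * s) ^ (-1 / (lam + 1) : ℝ))
              ^ (-(2 * (lam + 1)) : ℝ))
    (T : ℝ) (S : ℝ → ℝ)
    (hS : ∀ t ∈ Set.Ico (0:ℝ) T, HasDerivWithinAt S (G (S t)) (Set.Ico 0 T) t)
    (hrange : ∀ t ∈ Set.Ico (0:ℝ) T, 0 ≤ S t ∧ S t < Sstar) :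
    ∀ t ∈ Set.Ico (0:ℝ) T,
      HasDerivWithinAt (fun s => G (S s))
        (2 * (lam + 1) * G (S t) ^ (2 + 1 / (2 * (lam + 1)) : ℝ)
          * tavg (fun p => γ0 p * (1 + (lam + 1) * γ0 p * S t) ^ (-(lam + 2) / (lam + 1) : ℝ)))
        (Set.Ico 0 T) t := by
  simp only [tavg_eq_setAverage] at hG ⊢
  exact fun t ht => stmt14_general (isCompact_Icc.prod isCompact_Icc)
    (by rw [volume_Icc_prod_Icc_two_pi]; positivity) hlam hcont.continuousOn ht (hS t ht)
    (fun u hu => hG _ (hrange u hu)) fun p hp =>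
      one_add_mul_pos_of_lt_ite (hγp.2 ⟨p, hp, rfl⟩) (hγm.2 ⟨p, hp, rfl⟩) (hrange t ht).1
        (hSstar ▸ (hrange t ht).2)
end

section
/- Let λ > −1 and let γ₀ : ℝ² → ℝ be C², 2π-periodic in each variable, with torus mean ⟨γ₀⟩ = 0, not identically zero, and of generic type: γ₀ attains its minimum γ₋ over the torus at a unique point (modulo 2π-periods) at which its Hessian matrix is positive definite, and attains its maximum at a unique point (modulo periods) at which its Hessian is negative definite. Set S* := −1/((λ+1)γ₋) > 0, for S ∈ [0,S*) define G(S) := ⟨(1 + (λ+1)γ₀S)^{−1/(λ+1)}⟩^{−2(λ+1)}, and T* := ∫₀^{S*} G(S)⁻¹ dS ∈ (0,∞]. Then: (i) if −1 < λ ≤ −1/2 then T* = ∞ (the flow is regular for all time) and lim_{S→S*⁻} G(S) = 0; (ii) if −1/2 < λ ≤ 0 then T* < ∞ and lim_{S→S*⁻} G(S) = 0; (iii) if λ > 0 then lim_{S→S*⁻} G(S) > 0 and T* < ∞. -/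
open Real MeasureTheory Topology Filter ENNReal

/-!
Put `a = λ + 1` and `u = (γ₀ - γ₋) / (-γ₋) ≥ 0`. Since `γ₋ = -1 / (a S*)`, the base of the power in
`G(S)` is `1 - t + t u` with `t = S / S*`, so `G(S) = J(t) ^ (-2a)` for `J(t) = ⟨(1 - t + t u)⁻ᵖ⟩`,
`p = 1 / a`, and `T* = S* ∫₀¹ J(t) ^ (2a) dt`.

Near a nondegenerate minimum `u` is comparable to the squared distance, so in two dimensions the
sublevel sets `{u ≤ ε}` have measure comparable to `ε`. By the layer-cake formula `⟨u⁻ʳ⟩ < ∞`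
exactly when `r < 1`. Hence `J` has a finite positive limit at `t = 1` when `p < 1`, i.e. `λ > 0`,
and tends to infinity when `p ≥ 1`. Chebyshev's inequality on `{u ≤ 1 - t}` gives
`J(t) ≳ (1 - t) ^ (1 - p)`, while splitting off the power `-r` gives `J(t) ≲ (1 - t) ^ (r - p)` for
every `r < 1` with `r ≤ p`. Therefore `∫₀¹ J ^ (2a) < ∞` exactly when `(p - 1) 2a = 2 - 2a < 1`,
i.e. `λ > -1/2`.
-/

section Development

open Asymptotics Set Metric ProbabilityTheory

section NondegenerateMinimum

variable {E F : Type*} [NormedAddCommGroup E] [NormedSpace ℝ E] [NormedAddCommGroup F]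
  [NormedSpace ℝ F]

theorem isCoercive_of_forall_pos [FiniteDimensional ℝ E] {B : E →L[ℝ] E →L[ℝ] ℝ}
    (hB : ∀ v, v ≠ 0 → 0 < B v v) : IsCoercive B := by
  cases subsingleton_or_nontrivial E
  · exact ⟨1, one_pos, fun v => by simp [Subsingleton.elim v 0]⟩
  obtain ⟨w, hw, hmin⟩ := (isCompact_sphere (0 : E) 1).exists_isMinOn
    (NormedSpace.sphere_nonempty.mpr zero_le_one)
    (show Continuous fun v => B v v by fun_prop).continuousOn
  have hw0 : w ≠ 0 := ne_of_mem_sphere hw one_ne_zero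
  refine ⟨B w w, hB w hw0, fun v => ?_⟩
  rcases eq_or_ne v 0 with rfl | hv
  · simp
  have hv' : 0 < ‖v‖ := norm_pos_iff.mpr hv
  have hsphere : ‖v‖⁻¹ • v ∈ sphere (0 : E) 1 := by simp [norm_smul, hv'.ne']
  calc B w w * ‖v‖ * ‖v‖ ≤ B (‖v‖⁻¹ • v) (‖v‖⁻¹ • v) * ‖v‖ * ‖v‖ := by gcongr; exact hmin hsphere
    _ = B v v := by
      simp only [map_smul, smul_apply, smul_eq_mul]
      field_simp

theorem isTheta_apply_self_of_isCoercive {B : E →L[ℝ] E →L[ℝ] ℝ} (hB : IsCoercive B)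
    (l : Filter E) :
    (fun v => B v v) =Θ[l] fun v => ‖v‖ ^ 2 := by
  obtain ⟨c, hc, hle⟩ := hB
  refine ⟨.of_bound ‖B‖ (.of_forall fun v => ?_), .of_bound c⁻¹ (.of_forall fun v => ?_)⟩
  · simpa [pow_two, mul_assoc] using B.le_opNorm₂ v v
  · rw [norm_pow, norm_norm, le_inv_mul_iff₀ hc, pow_two, ← mul_assoc]
    exact (hle v).trans (le_abs_self _)

theorem taylor_two_isLittleO {f : E → F} {p : E} (hf : ContDiffAt ℝ 2 f p) :
    (fun x => f x - f p - fderiv ℝ f p (x - p) -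
        (2⁻¹ : ℝ) • fderiv ℝ (fderiv ℝ f) p (x - p) (x - p)) =o[𝓝 p] fun x => ‖x - p‖ ^ 2 := by
  set A := fderiv ℝ (fderiv ℝ f) p
  have hsymm : IsSymmSndFDerivAt ℝ f p := hf.isSymmSndFDerivAt (by simp)
  have hA : HasFDerivAt (fderiv ℝ f) A p :=
    ((hf.fderiv_right (m := 1) le_rfl).differentiableAt one_ne_zero).hasFDerivAt
  have hdiff : ∀ᶠ x in 𝓝 p, DifferentiableAt ℝ f x :=
    (hf.eventually (by simp)).mono fun x hx => hx.differentiableAt two_ne_zero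
  obtain ⟨δ, hδ, hball⟩ := Metric.eventually_nhds_iff_ball.mp hdiff
  have hremainder : ∀ x ∈ ball p δ, HasFDerivWithinAt
      (fun x => f x - fderiv ℝ f p (x - p) - (2⁻¹ : ℝ) • A (x - p) (x - p))
      (fderiv ℝ f x - fderiv ℝ f p - A (x - p)) (ball p δ) x := by
    intro x hx
    have hid : HasFDerivAt (fun x => x - p) (.id ℝ E) x := (hasFDerivAt_id x).sub_const p
    have hquad := ((A.hasFDerivAt.comp x hid).clm_apply hid).const_smul (2⁻¹ : ℝ)
    refine ((((hball x hx).hasFDerivAt.sub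
      ((fderiv ℝ f p).hasFDerivAt.comp x hid)).sub hquad).congr_fderiv ?_).hasFDerivWithinAt
    ext v
    have hswap : A v (x - p) = A (x - p) v := hsymm.eq v (x - p)
    simp only [ContinuousLinearMap.comp_id, sub_apply, smul_apply, add_apply,
      ContinuousLinearMap.flip_apply, hswap, Function.comp_apply, smul_add, ← add_smul]
    norm_num
  have hsmall := (convex_ball p δ).isLittleO_pow_succ (n := 1) (mem_ball_self hδ) hremainder (by
    simpa only [nhdsWithin_eq_nhds.mpr (ball_mem_nhds p hδ), pow_one] using
      hA.isLittleO.norm_right)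
  rw [nhdsWithin_eq_nhds.mpr (ball_mem_nhds p hδ)] at hsmall
  refine hsmall.congr_left fun x => ?_
  simp only [sub_self, map_zero, smul_zero, sub_zero]
  abel

theorem fderiv_fderiv_apply_const {f : E → F} {p : E} (hf : DifferentiableAt ℝ (fderiv ℝ f) p)
    (v : E) : fderiv ℝ (fun q => fderiv ℝ f q v) p v = fderiv ℝ (fderiv ℝ f) p v v := by
  simp [fderiv_clm_apply hf (differentiableAt_const v)]

theorem isTheta_sub_of_isLocalMin_of_hessian_pos [FiniteDimensional ℝ E] {f : E → ℝ} {p : E}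
    (hf : ContDiffAt ℝ 2 f p) (hmin : IsLocalMin f p)
    (hpos : ∀ v, v ≠ 0 → 0 < fderiv ℝ (fun q => fderiv ℝ f q v) p v) :
    (fun x => f x - f p) =Θ[𝓝 p] fun x => ‖x - p‖ ^ 2 := by
  set A := fderiv ℝ (fderiv ℝ f) p
  have hdiff : DifferentiableAt ℝ (fderiv ℝ f) p :=
    (hf.fderiv_right (m := 1) le_rfl).differentiableAt one_ne_zero
  have hcoercive : IsCoercive A := isCoercive_of_forall_pos fun v hv => by
    simpa only [fderiv_fderiv_apply_const hdiff] using hpos v hv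
  have hquad : (fun x => 2⁻¹ * A (x - p) (x - p)) =Θ[𝓝 p] fun x => ‖x - p‖ ^ 2 :=
    have h := isTheta_apply_self_of_isCoercive hcoercive ⊤
    .const_mul_left (inv_ne_zero two_ne_zero)
      ⟨h.1.comp_tendsto tendsto_top, h.2.comp_tendsto tendsto_top⟩
  have hremainder : (fun x => f x - f p - 2⁻¹ * A (x - p) (x - p)) =o[𝓝 p]
      fun x => ‖x - p‖ ^ 2 := by
    simpa only [hmin.fderiv_eq_zero, zero_apply, sub_zero, smul_eq_mul]
      using taylor_two_isLittleO hf
  simpa only [Pi.add_def, add_sub_cancel] using hquad.add_isLittleO hremainder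

end NondegenerateMinimum

section PowerScale

theorem tendsto_const_mul_rpow_nhdsGT_zero {C a : ℝ} (hC : 0 < C) (ha : 0 < a) :
    Tendsto (fun ε : ℝ => (C * ε) ^ a) (𝓝[>] 0) (𝓝[>] 0) := by
  refine tendsto_nhdsWithin_iff.mpr ⟨?_, eventually_mem_nhdsWithin.mono fun ε hε =>
    rpow_pos_of_pos (mul_pos hC hε) a⟩
  have hcont : Continuous fun ε : ℝ => (C * ε) ^ a := by fun_prop (disch := exact ha.le)
  simpa [zero_rpow ha.ne'] using (hcont.tendsto 0).mono_left nhdsWithin_le_nhds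

theorem isTheta_const_mul_rpow_rpow {C : ℝ} (hC : 0 < C) (a b : ℝ) :
    (fun ε : ℝ => ((C * ε) ^ a) ^ b) =Θ[𝓝[>] 0] fun ε => ε ^ (a * b) := by
  have heq : (fun ε : ℝ => ((C * ε) ^ a) ^ b) =ᶠ[𝓝[>] 0] fun ε => C ^ (a * b) * ε ^ (a * b) := by
    filter_upwards [self_mem_nhdsWithin] with ε hε
    rw [← rpow_mul (mul_pos hC hε).le, mul_rpow hC.le (mem_Ioi.mp hε).le]
  exact heq.trans_isTheta (isTheta_rfl.const_mul_left (rpow_pos_of_pos hC _).ne')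

end PowerScale

section SublevelMeasure

theorem isBigO_measureReal_of_subset {X α : Type*} [MeasurableSpace X] {ν : Measure X}
    [IsFiniteMeasure ν] {l : Filter α} {s t : α → Set X}
    (hst : ∀ᶠ ε in l, s ε ⊆ t ε) : (fun ε => ν.real (s ε)) =O[l] fun ε => ν.real (t ε) :=
  .of_bound' <| hst.mono fun ε hε => by
    simpa only [norm_of_nonneg measureReal_nonneg] using measureReal_mono hε

variable {X : Type*} [PseudoMetricSpace X] [MeasurableSpace X] {ν : Measure X} [IsFiniteMeasure ν]
  {u : X → ℝ} {q : X} {d : ℝ} {k : ℕ}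

theorem exists_nhds_isBigO_measureReal_sublevel (hu : ∀ x, 0 ≤ u x) (hk : k ≠ 0)
    (hν : (fun r => ν.real (closedBall q r)) =O[𝓝[>] 0] fun r => r ^ d)
    (hgrowth : (fun x => dist x q ^ k) =O[𝓝 q] u) :
    ∃ U ∈ 𝓝 q, (fun ε => ν.real (U ∩ {x | u x ≤ ε})) =O[𝓝[>] 0] fun ε => ε ^ (d / k) := by
  obtain ⟨C, hC, hle⟩ := hgrowth.exists_pos
  refine ⟨_, hle.bound, ?_⟩
  have hball : ∀ ε, {x | ‖dist x q ^ k‖ ≤ C * ‖u x‖} ∩ {x | u x ≤ ε} ⊆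
      closedBall q ((C * ε) ^ (k⁻¹ : ℝ)) := by
    rintro ε x ⟨hx, hxε : u x ≤ ε⟩
    have hε : 0 ≤ C * ε := mul_nonneg hC.le ((hu x).trans hxε)
    rw [mem_closedBall, le_rpow_inv_iff_of_pos dist_nonneg hε (by positivity), Real.rpow_natCast]
    calc dist x q ^ k ≤ C * u x := by simpa [abs_of_nonneg (hu x)] using hx
      _ ≤ C * ε := by gcongr
  refine (isBigO_measureReal_of_subset (.of_forall hball)).trans ((hν.comp_tendsto
    (tendsto_const_mul_rpow_nhdsGT_zero hC (by positivity))).trans ?_)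
  rw [div_eq_inv_mul]
  exact (isTheta_const_mul_rpow_rpow hC _ d).isBigO

theorem isBigO_measureReal_sublevel_of_isCompact {K : Set X} (hK : IsCompact K)
    (hu : ∀ x, 0 ≤ u x) (hk : k ≠ 0)
    (hν : ∀ q ∈ K, (fun r => ν.real (closedBall q r)) =O[𝓝[>] 0] fun r => r ^ d)
    (hgrowth : ∀ q ∈ K, (fun x => dist x q ^ k) =O[𝓝 q] u) :
    (fun ε => ν.real (K ∩ {x | u x ≤ ε})) =O[𝓝[>] 0] fun ε => ε ^ (d / k) := by
  refine hK.induction_on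
    (p := fun K => (fun ε => ν.real (K ∩ {x | u x ≤ ε})) =O[𝓝[>] 0] fun ε => ε ^ (d / k))
    ?_ (fun K L hKL hL => ?_) (fun K L hK hL => ?_) fun q hq => ?_
  · simpa using isBigO_zero _ _
  · exact (isBigO_measureReal_of_subset (.of_forall fun ε =>
      inter_subset_inter_left _ hKL)).trans hL
  · refine .trans (.of_norm_le fun ε => ?_) (hK.add hL)
    rw [norm_of_nonneg measureReal_nonneg, union_inter_distrib_right]
    exact measureReal_union_le _ _
  · obtain ⟨U, hU, hO⟩ := exists_nhds_isBigO_measureReal_sublevel hu hk (hν q hq) (hgrowth q hq)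
    exact ⟨U, mem_nhdsWithin_of_mem_nhds hU, hO⟩

theorem rpow_isBigO_measureReal_sublevel (hk : k ≠ 0)
    (hν : (fun r => r ^ d) =O[𝓝[>] 0] fun r => ν.real (closedBall q r))
    (hgrowth : u =O[𝓝 q] fun x => dist x q ^ k) :
    (fun ε => ε ^ (d / k)) =O[𝓝[>] 0] fun ε => ν.real {x | u x ≤ ε} := by
  obtain ⟨C, hC, hle⟩ := hgrowth.exists_pos
  obtain ⟨δ, hδ, hball⟩ := nhds_basis_closedBall.mem_iff.mp hle.bound
  have hradius := tendsto_const_mul_rpow_nhdsGT_zero (inv_pos.mpr hC)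
    (inv_pos.mpr (Nat.cast_pos.mpr hk.bot_lt : (0 : ℝ) < k))
  have hmono : (fun ε => ν.real (closedBall q ((C⁻¹ * ε) ^ (k⁻¹ : ℝ)))) =O[𝓝[>] 0]
      fun ε => ν.real {x | u x ≤ ε} := by
    refine isBigO_measureReal_of_subset ?_
    filter_upwards [hradius (Ioc_mem_nhdsGT hδ), self_mem_nhdsWithin] with ε hsmall hε x hx
    have hdist : dist x q ^ k ≤ C⁻¹ * ε := by
      rwa [mem_closedBall, le_rpow_inv_iff_of_pos dist_nonneg
        (mul_nonneg (inv_pos.mpr hC).le (mem_Ioi.mp hε).le) (by positivity),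
        Real.rpow_natCast] at hx
    calc u x ≤ ‖u x‖ := le_norm_self _
      _ ≤ C * ‖dist x q ^ k‖ := hball (closedBall_subset_closedBall hsmall.2 hx)
      _ = C * dist x q ^ k := by rw [norm_of_nonneg (by positivity)]
      _ ≤ C * (C⁻¹ * ε) := by gcongr
      _ = ε := mul_inv_cancel_left₀ hC.ne' ε
  refine .trans ?_ ((hν.comp_tendsto hradius).trans hmono)
  rw [div_eq_inv_mul]
  exact (isTheta_const_mul_rpow_rpow (inv_pos.mpr hC) _ d).symm.isBigO

end SublevelMeasure

section NegativeMoments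

variable {X : Type*} [MeasurableSpace X] {ν : Measure X} [IsFiniteMeasure ν] {u : X → ℝ} {r s : ℝ}

theorem ae_pos_of_isBigO_measureReal_sublevel (hs : 0 < s)
    (hV : (fun ε => ν.real {x | u x ≤ ε}) =O[𝓝[>] 0] fun ε => ε ^ s) : ∀ᵐ x ∂ν, 0 < u x := by
  have hpow : Tendsto (fun ε : ℝ => ε ^ s) (𝓝[>] 0) (𝓝 0) := by
    simpa [zero_rpow hs.ne'] using
      ((continuous_rpow_const hs.le).tendsto 0).mono_left nhdsWithin_le_nhds
  have hle : ν.real {x | u x ≤ 0} ≤ 0 :=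
    ge_of_tendsto (hV.trans_tendsto hpow) <| eventually_mem_nhdsWithin.mono fun ε hε =>
      measureReal_mono fun x (hx : u x ≤ 0) => hx.trans (mem_Ioi.mp hε).le
  simpa [ae_iff] using (measureReal_eq_zero_iff).mp (hle.antisymm measureReal_nonneg)

theorem measurable_measureReal_sublevel : Measurable fun ε => ν.real {x | u x ≤ ε} :=
  Monotone.measurable fun _ _ hle => measureReal_mono fun _ hx => le_trans hx hle

theorem integrable_rpow_neg_iff_integrableOn_Ioi (hu : Measurable u) (hpos : ∀ᵐ x ∂ν, 0 < u x)
    (hr : 0 < r) :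
    Integrable (fun x => u x ^ (-r)) ν ↔
      IntegrableOn (fun τ => ν.real {x | u x ≤ τ⁻¹} * τ ^ (r - 1)) (Ioi 0) := by
  have hmeas : Measurable fun τ : ℝ => ν.real {x | u x ≤ τ⁻¹} * τ ^ (r - 1) :=
    (measurable_measureReal_sublevel.comp measurable_inv).mul (measurable_id.pow_const _)
  have hlevel : ∀ τ ∈ Ioi (0 : ℝ), ν {x | τ ≤ (u x)⁻¹} * ENNReal.ofReal (τ ^ (r - 1)) =
      ENNReal.ofReal (ν.real {x | u x ≤ τ⁻¹} * τ ^ (r - 1)) := by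
    intro τ hτ
    rw [ofReal_mul measureReal_nonneg, ofReal_measureReal]
    congr 1
    refine measure_congr (hpos.mono fun x hx => propext ?_)
    exact le_inv_comm₀ hτ hx
  have hlayer : ∫⁻ x, ENNReal.ofReal (u x ^ (-r)) ∂ν = ENNReal.ofReal r *
      ∫⁻ τ in Ioi (0 : ℝ), ENNReal.ofReal (ν.real {x | u x ≤ τ⁻¹} * τ ^ (r - 1)) := by
    rw [← setLIntegral_congr_fun measurableSet_Ioi hlevel,
      ← lintegral_rpow_eq_lintegral_meas_le_mul ν (hpos.mono fun x hx => (inv_pos.mpr hx).le)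
        hu.inv.aemeasurable hr]
    exact lintegral_congr_ae (hpos.mono fun x hx => by simp only [rpow_neg hx.le, inv_rpow hx.le])
  rw [← lintegral_ofReal_ne_top_iff_integrable (hu.pow_const _).aestronglyMeasurable
      (hpos.mono fun x hx => rpow_nonneg hx.le _), IntegrableOn,
    ← lintegral_ofReal_ne_top_iff_integrable hmeas.aestronglyMeasurable
      ((ae_restrict_mem measurableSet_Ioi).mono fun τ hτ =>
        mul_nonneg measureReal_nonneg (rpow_nonneg (mem_Ioi.mp hτ).le _)), hlayer]
  simp [ENNReal.mul_eq_top, hr]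

theorem integrableOn_Ioi_iff_integrableAtFilter_atTop {f : ℝ → ℝ} {a : ℝ}
    (hf : ∀ b, IntegrableOn f (Ioc a b)) :
    IntegrableOn f (Ioi a) ↔ IntegrableAtFilter f atTop := by
  refine ⟨fun h => ⟨Ioi a, Ioi_mem_atTop a, h⟩, fun ⟨t, ht, hft⟩ => ?_⟩
  obtain ⟨b, hb⟩ := mem_atTop_sets.mp ht
  have htail : IntegrableOn f (Ioi b) := hft.mono_set fun x hx => hb x (mem_Ioi.mp hx).le
  exact ((hf b).union htail).mono_set fun x hx => (le_or_gt x b).imp (⟨hx, ·⟩) id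

theorem integrable_rpow_neg_iff_integrableAtFilter (hu : Measurable u) (hpos : ∀ᵐ x ∂ν, 0 < u x)
    (hr : 0 < r) :
    Integrable (fun x => u x ^ (-r)) ν ↔
      IntegrableAtFilter (fun τ => ν.real {x | u x ≤ τ⁻¹} * τ ^ (r - 1)) atTop := by
  rw [integrable_rpow_neg_iff_integrableOn_Ioi hu hpos hr,
    integrableOn_Ioi_iff_integrableAtFilter_atTop]
  intro b
  have hpow : IntegrableOn (fun τ : ℝ => τ ^ (r - 1)) (Ioc 0 b) :=
    (intervalIntegral.intervalIntegrable_rpow' (by linarith)).1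
  refine hpow.bdd_mul (c := ν.real univ)
    (measurable_measureReal_sublevel.comp measurable_inv).aestronglyMeasurable
    (.of_forall fun τ => ?_)
  rw [norm_of_nonneg measureReal_nonneg]
  exact measureReal_mono (subset_univ _)

theorem rpow_inv_mul_rpow_sub_one_eventuallyEq (r s : ℝ) :
    (fun τ : ℝ => τ⁻¹ ^ s * τ ^ (r - 1)) =ᶠ[atTop] fun τ => τ ^ (r - s - 1) := by
  filter_upwards [eventually_gt_atTop 0] with τ hτ
  rw [inv_rpow hτ.le, ← rpow_neg hτ.le, ← rpow_add hτ]
  ring_nf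

theorem integrable_rpow_neg_of_isBigO (hu : Measurable u) (hr : 0 ≤ r) (hrs : r < s)
    (hV : (fun ε => ν.real {x | u x ≤ ε}) =O[𝓝[>] 0] fun ε => ε ^ s) :
    Integrable (fun x => u x ^ (-r)) ν := by
  rcases hr.eq_or_lt with rfl | hr
  · simp
  rw [integrable_rpow_neg_iff_integrableAtFilter hu
    (ae_pos_of_isBigO_measureReal_sublevel (hr.trans hrs) hV) hr]
  have hle : (fun τ => ν.real {x | u x ≤ τ⁻¹} * τ ^ (r - 1)) =O[atTop] fun τ => τ ^ (r - s - 1) :=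
    ((hV.comp_tendsto tendsto_inv_atTop_nhdsGT_zero).mul (isBigO_refl _ _)).trans_eventuallyEq
      (rpow_inv_mul_rpow_sub_one_eventuallyEq r s)
  refine hle.integrableAtFilter ?_ (integrableAtFilter_rpow_atTop_iff.mpr (by linarith))
  exact ((measurable_measureReal_sublevel.comp measurable_inv).mul
    (measurable_id.pow_const _)).stronglyMeasurable.stronglyMeasurableAtFilter

theorem not_integrable_rpow_neg_of_isBigO (hu : Measurable u) (hpos : ∀ᵐ x ∂ν, 0 < u x)
    (hr : 0 < r) (hsr : s ≤ r)
    (hV : (fun ε => ε ^ s) =O[𝓝[>] 0] fun ε => ν.real {x | u x ≤ ε}) :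
    ¬ Integrable (fun x => u x ^ (-r)) ν := by
  rw [integrable_rpow_neg_iff_integrableAtFilter hu hpos hr]
  intro hint
  have hle : (fun τ => τ ^ (r - s - 1)) =O[atTop] fun τ => ν.real {x | u x ≤ τ⁻¹} * τ ^ (r - 1) :=
    (rpow_inv_mul_rpow_sub_one_eventuallyEq r s).symm.trans_isBigO
      ((hV.comp_tendsto tendsto_inv_atTop_nhdsGT_zero).mul (isBigO_refl _ _))
  have hpow : IntegrableAtFilter (fun τ : ℝ => τ ^ (r - s - 1)) atTop := hle.integrableAtFilter
    (measurable_id.pow_const _).stronglyMeasurable.stronglyMeasurableAtFilter hint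
  linarith [integrableAtFilter_rpow_atTop_iff.mp hpow]

end NegativeMoments

section OneSided

theorem integrableOn_Ioo_sub_rpow_iff {a b β : ℝ} (hab : a < b) :
    IntegrableOn (fun t => (b - t) ^ β) (Ioo a b) ↔ -1 < β := by
  rw [← intervalIntegral.integrableOn_Ioo_rpow_iff (sub_pos.mpr hab),
    ← (Measure.measurePreserving_sub_left volume b).integrableOn_comp_preimage
      (measurableEmbedding_subLeft b)]
  simp [Function.comp_def]

theorem lintegral_Ico_ofReal_lt_top {f : ℝ → ℝ} {a b β C : ℝ} (hβ : -1 < β)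
    (hf : ∀ t ∈ Ico a b, f t ≤ C * (b - t) ^ β) : ∫⁻ t in Ico a b, ENNReal.ofReal (f t) < ⊤ := by
  rcases le_or_gt b a with hba | hab
  · simp [Ico_eq_empty_of_le hba]
  have hint : IntegrableOn (fun t => C * (b - t) ^ β) (Ico a b) :=
    (integrableOn_Ico_iff_integrableOn_Ioo enorm_ne_top).mpr
      (((integrableOn_Ioo_sub_rpow_iff hab).mpr hβ).const_mul C)
  exact (setLIntegral_mono' measurableSet_Ico fun t ht => ofReal_le_ofReal (hf t ht)).trans_lt
    hint.lintegral_lt_top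

theorem lintegral_Ico_enorm_eq_top {f : ℝ → ℝ} {a b β : ℝ} (hab : a < b) (hβ : β ≤ -1)
    (hf : (fun t => (b - t) ^ β) =O[𝓝[<] b] f) : ∫⁻ t in Ico a b, ‖f t‖ₑ = ⊤ := by
  obtain ⟨C, hC⟩ := hf.bound
  obtain ⟨c, ⟨hac, hcb⟩, hle⟩ := (mem_nhdsLT_iff_exists_mem_Ico_Ioo_subset hab).mp hC
  by_contra hne
  have hint : IntegrableOn (fun t => (b - t) ^ β) (Ioo c b) := by
    refine ⟨((measurable_id.const_sub b).pow_const β).aestronglyMeasurable, ?_⟩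
    calc ∫⁻ t in Ioo c b, ‖(b - t) ^ β‖ₑ ≤ ∫⁻ t in Ioo c b, ENNReal.ofReal C * ‖f t‖ₑ :=
          setLIntegral_mono' measurableSet_Ioo fun t ht => by
            rw [← ofReal_norm, ← ofReal_norm, ← ofReal_mul' (norm_nonneg _)]
            exact ofReal_le_ofReal (hle ht)
      _ ≤ ENNReal.ofReal C * ∫⁻ t in Ico a b, ‖f t‖ₑ := by
          rw [lintegral_const_mul' _ _ ofReal_ne_top]
          gcongr
          exact fun t ht => ⟨hac.trans ht.1.le, ht.2⟩
      _ < ⊤ := mul_lt_top ofReal_lt_top (lt_top_iff_ne_top.mpr hne)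
  exact ((integrableOn_Ioo_sub_rpow_iff hcb).mp hint).not_ge hβ

theorem lintegral_Ico_zero_eq_mul {S : ℝ} (hS : 0 < S) (F : ℝ → ℝ≥0∞) :
    ∫⁻ s in Ico 0 S, F s = ENNReal.ofReal S * ∫⁻ t in Ico 0 1, F (S * t) := by
  have himage : (fun t => S * t) '' Ico 0 1 = Ico 0 S := by simp [image_mul_left_Ico hS]
  rw [← himage, lintegral_image_eq_lintegral_abs_deriv_mul measurableSet_Ico
    (fun t _ => (hasDerivAt_const_mul S).hasDerivWithinAt)
    (mul_right_injective₀ hS.ne').injOn, ← lintegral_const_mul' _ _ ofReal_ne_top]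
  simp [abs_of_pos hS]

end OneSided

section InterpolatedMoment

variable {X : Type*} [MeasurableSpace X] {ν : Measure X} {u : X → ℝ} {p r s t κ v : ℝ}

theorem integral_pos_of_ae_pos [NeZero ν] {f : X → ℝ} (hf : ∀ᵐ x ∂ν, 0 < f x)
    (hint : Integrable f ν) : 0 < ∫ x, f x ∂ν := by
  have hsupport : Function.support f =ᵐ[ν] univ :=
    eventuallyEq_univ.mpr (hf.mono fun x hx => hx.ne')
  rw [integral_pos_iff_support_of_nonneg_ae (hf.mono fun x hx => hx.le) hint,
    measure_congr hsupport]
  exact NeZero.pos _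

/-- The moment `∫ (1 - t + t u)⁻ᵖ dν` interpolating between the total mass at `t = 0` and the
negative moment `∫ u⁻ᵖ dν` at `t = 1`. With `u` proportional to `γ₀ - γ₋`, `p = 1 / (λ + 1)` and
`t = S / S*` it is the torus average that defines `G(S)`. -/
noncomputable def interpMoment (ν : Measure X) (u : X → ℝ) (p t : ℝ) : ℝ :=
  ∫ x, (1 - t + t * u x) ^ (-p) ∂ν

theorem one_sub_le_interp (ht : 0 ≤ t) (hv : 0 ≤ v) : 1 - t ≤ 1 - t + t * v :=
  le_add_of_nonneg_right (mul_nonneg ht hv)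

theorem interp_pos (ht : t ∈ Ico (0 : ℝ) 1) (hv : 0 ≤ v) : 0 < 1 - t + t * v :=
  (sub_pos.mpr ht.2).trans_le (one_sub_le_interp ht.1 hv)

theorem interp_rpow_neg_le (ht : t ∈ Ico (0 : ℝ) 1) (hv : 0 < v) (hr : 0 ≤ r) :
    (1 - t + t * v) ^ (-r) ≤ 1 + v ^ (-r) := by
  have hr' : -r ≤ 0 := neg_nonpos.mpr hr
  rcases le_total 1 v with h1v | hv1
  · have hbase : 1 ≤ 1 - t + t * v := by linarith [mul_le_mul_of_nonneg_left h1v ht.1]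
    exact (rpow_le_one_of_one_le_of_nonpos hbase hr').trans
      (le_add_of_nonneg_right (rpow_nonneg hv.le _))
  · have hbase : v ≤ 1 - t + t * v := by
      linarith [mul_le_mul_of_nonneg_left hv1 (sub_nonneg.mpr ht.2.le)]
    exact (rpow_le_rpow_of_nonpos hv hbase hr').trans (le_add_of_nonneg_left zero_le_one)

theorem measurable_interp_rpow (hu : Measurable u) (p t : ℝ) :
    Measurable fun x => (1 - t + t * u x) ^ (-p) :=
  ((hu.const_mul t).const_add (1 - t)).pow_const _

theorem integrable_interp_rpow [IsFiniteMeasure ν] (hu : Measurable u) (hpos : ∀ᵐ x ∂ν, 0 < u x)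
    (hp : 0 ≤ p) (ht : t ∈ Ico (0 : ℝ) 1) : Integrable (fun x => (1 - t + t * u x) ^ (-p)) ν := by
  refine .of_bound (measurable_interp_rpow hu p t).aestronglyMeasurable ((1 - t) ^ (-p))
    (hpos.mono fun x hx => ?_)
  rw [norm_of_nonneg (rpow_nonneg (interp_pos ht hx.le).le _)]
  exact rpow_le_rpow_of_nonpos (sub_pos.mpr ht.2) (one_sub_le_interp ht.1 hx.le)
    (neg_nonpos.mpr hp)

theorem interpMoment_nonneg (hu0 : ∀ᵐ x ∂ν, 0 ≤ u x) (ht : t ∈ Ico (0 : ℝ) 1) :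
    0 ≤ interpMoment ν u p t :=
  integral_nonneg_of_ae (hu0.mono fun _ hx => rpow_nonneg (interp_pos ht hx).le _)

theorem interpMoment_le [IsFiniteMeasure ν] (hu : Measurable u) (hpos : ∀ᵐ x ∂ν, 0 < u x)
    (hr : 0 ≤ r) (hrp : r ≤ p) (hint : Integrable (fun x => u x ^ (-r)) ν)
    (ht : t ∈ Ico (0 : ℝ) 1) :
    interpMoment ν u p t ≤ (∫ x, (1 + u x ^ (-r)) ∂ν) * (1 - t) ^ (r - p) := by
  have ht1 : 0 < 1 - t := sub_pos.mpr ht.2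
  rw [interpMoment, ← integral_mul_const]
  refine integral_mono_ae (integrable_interp_rpow hu hpos (hr.trans hrp) ht)
    (((integrable_const 1).add hint).mul_const _) (hpos.mono fun x hx => ?_)
  have hbase := interp_pos ht hx.le
  calc (1 - t + t * u x) ^ (-p)
      = (1 - t + t * u x) ^ (-r) * (1 - t + t * u x) ^ (r - p) := by
        rw [← rpow_add hbase, neg_add_eq_sub, sub_sub_cancel_left]
    _ ≤ (1 + u x ^ (-r)) * (1 - t) ^ (r - p) :=
        mul_le_mul (interp_rpow_neg_le ht hx hr)
          (rpow_le_rpow_of_nonpos ht1 (one_sub_le_interp ht.1 hx.le) (sub_nonpos.mpr hrp))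
          (rpow_nonneg hbase.le _) (add_nonneg zero_le_one (rpow_nonneg hx.le _))

theorem tendsto_interp_rpow (hv : 0 < v) (p : ℝ) :
    Tendsto (fun t => (1 - t + t * v) ^ (-p)) (𝓝[<] 1) (𝓝 (v ^ (-p))) := by
  have hcont : ContinuousAt (fun t : ℝ => (1 - t + t * v) ^ (-p)) 1 :=
    ContinuousAt.rpow_const (by fun_prop) (Or.inl (by simpa using hv.ne'))
  simpa using hcont.tendsto.mono_left nhdsWithin_le_nhds

theorem tendsto_interpMoment [IsFiniteMeasure ν] (hu : Measurable u) (hpos : ∀ᵐ x ∂ν, 0 < u x)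
    (hp : 0 ≤ p) (hint : Integrable (fun x => u x ^ (-p)) ν) :
    Tendsto (interpMoment ν u p) (𝓝[<] 1) (𝓝 (∫ x, u x ^ (-p) ∂ν)) := by
  refine tendsto_integral_filter_of_dominated_convergence (fun x => 1 + u x ^ (-p))
    (.of_forall fun t => (measurable_interp_rpow hu p t).aestronglyMeasurable) ?_
    ((integrable_const 1).add hint) (hpos.mono fun x hx => tendsto_interp_rpow hx p)
  filter_upwards [Ico_mem_nhdsLT one_pos] with t ht
  filter_upwards [hpos] with x hx
  rw [norm_of_nonneg (rpow_nonneg (interp_pos ht hx.le).le _)]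
  exact interp_rpow_neg_le ht hx hp

theorem tendsto_interpMoment_atTop [IsFiniteMeasure ν] (hu : Measurable u)
    (hpos : ∀ᵐ x ∂ν, 0 < u x) (hp : 0 ≤ p) (hint : ¬ Integrable (fun x => u x ^ (-p)) ν) :
    Tendsto (interpMoment ν u p) (𝓝[<] 1) atTop := by
  have htop : ∫⁻ x, ENNReal.ofReal (u x ^ (-p)) ∂ν = ⊤ := by
    contrapose! hint
    exact (lintegral_ofReal_ne_top_iff_integrable (hu.pow_const _).aestronglyMeasurable
      (hpos.mono fun x hx => rpow_nonneg hx.le _)).mp hint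
  have hfatou : ⊤ ≤ liminf (fun t => ∫⁻ x, ENNReal.ofReal ((1 - t + t * u x) ^ (-p)) ∂ν)
      (𝓝[<] (1 : ℝ)) := by
    calc ⊤ = ∫⁻ x, liminf (fun t => ENNReal.ofReal ((1 - t + t * u x) ^ (-p)))
            (𝓝[<] (1 : ℝ)) ∂ν := by
          rw [← htop]
          exact lintegral_congr_ae (hpos.mono fun x hx =>
            (tendsto_ofReal (tendsto_interp_rpow hx p)).liminf_eq.symm)
      _ ≤ _ := lintegral_liminf_le' fun t =>
          (measurable_interp_rpow hu p t).ennreal_ofReal.aemeasurable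
  have hofReal : Tendsto (fun t => ENNReal.ofReal (interpMoment ν u p t)) (𝓝[<] 1) (𝓝 ⊤) := by
    refine (tendsto_of_le_liminf_of_limsup_le hfatou le_top).congr' ?_
    filter_upwards [Ico_mem_nhdsLT one_pos] with t ht
    exact (ofReal_integral_eq_lintegral_ofReal (integrable_interp_rpow hu hpos hp ht)
      (hpos.mono fun x hx => rpow_nonneg (interp_pos ht hx.le).le _)).symm
  exact tendsto_ofReal_nhds_top.mp hofReal

theorem measureReal_sublevel_mul_le_interpMoment [IsFiniteMeasure ν] (hu : Measurable u)
    (hpos : ∀ᵐ x ∂ν, 0 < u x) (hp : 0 ≤ p) (ht : t ∈ Ico (0 : ℝ) 1) :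
    2 ^ (-p) * ((1 - t) ^ (-p) * ν.real {x | u x ≤ 1 - t}) ≤ interpMoment ν u p t := by
  have ht1 : 0 < 1 - t := sub_pos.mpr ht.2
  have hsub : {x | u x ≤ 1 - t} ≤ᵐ[ν] {x | (2 * (1 - t)) ^ (-p) ≤ (1 - t + t * u x) ^ (-p)} := by
    filter_upwards [hpos] with x hx (hxt : u x ≤ 1 - t)
    refine rpow_le_rpow_of_nonpos (interp_pos ht hx.le) ?_ (neg_nonpos.mpr hp)
    linarith [mul_le_of_le_one_left hx.le ht.2.le]
  calc 2 ^ (-p) * ((1 - t) ^ (-p) * ν.real {x | u x ≤ 1 - t})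
      = (2 * (1 - t)) ^ (-p) * ν.real {x | u x ≤ 1 - t} := by
        rw [mul_rpow zero_le_two ht1.le, mul_assoc]
    _ ≤ (2 * (1 - t)) ^ (-p) *
          ν.real {x | (2 * (1 - t)) ^ (-p) ≤ (1 - t + t * u x) ^ (-p)} := by
        gcongr ?_ * ?_
        exact ENNReal.toReal_mono (measure_ne_top _ _) (measure_mono_ae hsub)
    _ ≤ interpMoment ν u p t :=
        mul_meas_ge_le_integral_of_nonneg
          (hpos.mono fun x hx => rpow_nonneg (interp_pos ht hx.le).le _)
          (integrable_interp_rpow hu hpos hp ht) _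

theorem rpow_isBigO_interpMoment [IsFiniteMeasure ν] (hu : Measurable u) (hpos : ∀ᵐ x ∂ν, 0 < u x)
    (hp : 0 ≤ p) (hV : (fun ε => ε ^ s) =O[𝓝[>] 0] fun ε => ν.real {x | u x ≤ ε}) :
    (fun t => (1 - t) ^ (s - p)) =O[𝓝[<] 1] interpMoment ν u p := by
  have hsub : Tendsto (fun t : ℝ => 1 - t) (𝓝[<] 1) (𝓝[>] 0) := by
    refine tendsto_nhdsWithin_iff.mpr
      ⟨?_, eventually_mem_nhdsWithin.mono fun t (ht : t < 1) => mem_Ioi.mpr (sub_pos.mpr ht)⟩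
    exact ((continuous_const.sub continuous_id).tendsto' 1 0 (sub_self 1)).mono_left
      nhdsWithin_le_nhds
  calc (fun t : ℝ => (1 - t) ^ (s - p)) =ᶠ[𝓝[<] 1] fun t => (1 - t) ^ (-p) * (1 - t) ^ s := by
        filter_upwards [self_mem_nhdsWithin] with t (ht : t < 1)
        rw [← rpow_add (sub_pos.mpr ht), neg_add_eq_sub]
    _ =O[𝓝[<] 1] fun t => (1 - t) ^ (-p) * ν.real {x | u x ≤ 1 - t} :=
        (isBigO_refl _ _).mul (hV.comp_tendsto hsub)
    _ =O[𝓝[<] 1] interpMoment ν u p := by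
        refine .of_bound (2 ^ p) ?_
        filter_upwards [Ico_mem_nhdsLT one_pos] with t ht
        have hle := measureReal_sublevel_mul_le_interpMoment hu hpos hp ht
        rw [rpow_neg zero_le_two, inv_mul_le_iff₀ (by positivity)] at hle
        rw [norm_of_nonneg (mul_nonneg (rpow_nonneg (sub_pos.mpr ht.2).le _) measureReal_nonneg)]
        exact hle.trans (by gcongr; exact le_norm_self _)

theorem lintegral_interpMoment_rpow_lt_top [IsFiniteMeasure ν] (hu : Measurable u)
    (hpos : ∀ᵐ x ∂ν, 0 < u x) (hr : 0 ≤ r) (hrp : r ≤ p)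
    (hint : Integrable (fun x => u x ^ (-r)) ν) (hκ : 0 ≤ κ) (hκ1 : (p - r) * κ < 1) :
    ∫⁻ t in Ico (0 : ℝ) 1, ENNReal.ofReal (interpMoment ν u p t ^ κ) < ⊤ := by
  refine lintegral_Ico_ofReal_lt_top (C := (∫ x, (1 + u x ^ (-r)) ∂ν) ^ κ) (β := (r - p) * κ)
    (by linarith) fun t ht => ?_
  have hpos' : ∀ᵐ x ∂ν, 0 ≤ u x := hpos.mono fun x hx => hx.le
  have ht1 : 0 ≤ 1 - t := sub_nonneg.mpr ht.2.le
  rw [rpow_mul ht1, ← mul_rpow (integral_nonneg_of_ae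
    (hpos'.mono fun x hx => add_nonneg zero_le_one (rpow_nonneg hx _))) (rpow_nonneg ht1 _)]
  exact rpow_le_rpow (interpMoment_nonneg hpos' ht) (interpMoment_le hu hpos hr hrp hint ht) hκ

theorem lintegral_interpMoment_rpow_eq_top [IsFiniteMeasure ν] (hu : Measurable u)
    (hpos : ∀ᵐ x ∂ν, 0 < u x) (hp : 0 ≤ p) (hκ : 0 ≤ κ) (hκ1 : 1 ≤ (p - s) * κ)
    (hV : (fun ε => ε ^ s) =O[𝓝[>] 0] fun ε => ν.real {x | u x ≤ ε}) :
    ∫⁻ t in Ico (0 : ℝ) 1, ENNReal.ofReal (interpMoment ν u p t ^ κ) = ⊤ := by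
  have hnonneg : ∀ t ∈ Ico (0 : ℝ) 1, 0 ≤ interpMoment ν u p t := fun t ht =>
    interpMoment_nonneg (hpos.mono fun x hx => hx.le) ht
  have hO : (fun t : ℝ => (1 - t) ^ ((s - p) * κ)) =O[𝓝[<] 1]
      fun t => interpMoment ν u p t ^ κ := by
    refine ((rpow_isBigO_interpMoment hu hpos hp hV).rpow hκ ?_).congr' ?_ .rfl
    · filter_upwards [Ico_mem_nhdsLT one_pos] with t ht using hnonneg t ht
    · filter_upwards [self_mem_nhdsWithin] with t (ht : t < 1)
      exact (rpow_mul (sub_nonneg.mpr ht.le) _ _).symm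
  rw [← lintegral_Ico_enorm_eq_top one_pos (by linarith) hO]
  exact setLIntegral_congr_fun measurableSet_Ico fun t ht =>
    (Real.enorm_eq_ofReal (rpow_nonneg (hnonneg t ht) _)).symm

theorem exists_mem_Icc_lt_and_sub_mul_lt_one (hs : 0 < s) (hp : 0 ≤ p) (hκ : (p - s) * κ < 1) :
    ∃ r ∈ Icc 0 p, r < s ∧ (p - r) * κ < 1 := by
  rcases lt_or_ge p s with hps | hsp
  · exact ⟨p, ⟨hp, le_rfl⟩, hps, by simp⟩
  have hlim : Tendsto (fun r => (p - r) * κ) (𝓝[<] s) (𝓝 ((p - s) * κ)) :=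
    (Continuous.tendsto (by fun_prop) s).mono_left nhdsWithin_le_nhds
  obtain ⟨r, hrκ, hr0, hrs⟩ := ((hlim.eventually_lt_const hκ).and (Ioo_mem_nhdsLT hs)).exists
  exact ⟨r, ⟨hr0.le, hrs.le.trans hsp⟩, hrs, hrκ⟩

theorem lintegral_interpMoment_rpow_lt_top_iff [IsFiniteMeasure ν] (hu : Measurable u)
    (hs : 0 < s) (hp : 0 ≤ p) (hκ : 0 ≤ κ)
    (hV : (fun ε => ν.real {x | u x ≤ ε}) =Θ[𝓝[>] 0] fun ε => ε ^ s) :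
    ∫⁻ t in Ico (0 : ℝ) 1, ENNReal.ofReal (interpMoment ν u p t ^ κ) < ⊤ ↔ (p - s) * κ < 1 := by
  have hpos := ae_pos_of_isBigO_measureReal_sublevel hs hV.1
  refine ⟨fun hlt => ?_, fun hlt => ?_⟩
  · contrapose! hlt
    exact (lintegral_interpMoment_rpow_eq_top hu hpos hp hκ hlt hV.2).ge
  · obtain ⟨r, ⟨hr0, hrp⟩, hrs, hrκ⟩ := exists_mem_Icc_lt_and_sub_mul_lt_one hs hp hlt
    exact lintegral_interpMoment_rpow_lt_top hu hpos hr0 hrp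
      (integrable_rpow_neg_of_isBigO hu hr0 hrs hV.1) hκ hrκ

theorem exists_pos_tendsto_interpMoment_rpow [IsFiniteMeasure ν] [NeZero ν] (hu : Measurable u)
    (hp : 0 ≤ p) (hps : p < s) (hV : (fun ε => ν.real {x | u x ≤ ε}) =O[𝓝[>] 0] fun ε => ε ^ s)
    (κ : ℝ) : ∃ L, Tendsto (fun t => interpMoment ν u p t ^ κ) (𝓝[<] 1) (𝓝 L) ∧ 0 < L := by
  have hpos := ae_pos_of_isBigO_measureReal_sublevel (hp.trans_lt hps) hV
  have hint := integrable_rpow_neg_of_isBigO hu hp hps hV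
  have hlim : 0 < ∫ x, u x ^ (-p) ∂ν :=
    integral_pos_of_ae_pos (hpos.mono fun x hx => rpow_pos_of_pos hx _) hint
  exact ⟨_, (tendsto_interpMoment hu hpos hp hint).rpow_const (Or.inl hlim.ne'),
    rpow_pos_of_pos hlim κ⟩

theorem tendsto_interpMoment_rpow_neg [IsFiniteMeasure ν] (hu : Measurable u)
    (hs : 0 < s) (hsp : s ≤ p) (hκ : 0 < κ)
    (hV : (fun ε => ν.real {x | u x ≤ ε}) =Θ[𝓝[>] 0] fun ε => ε ^ s) :
    Tendsto (fun t => interpMoment ν u p t ^ (-κ)) (𝓝[<] 1) (𝓝 0) := by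
  have hpos := ae_pos_of_isBigO_measureReal_sublevel hs hV.1
  have hp : 0 < p := hs.trans_le hsp
  exact (tendsto_rpow_neg_atTop hκ).comp (tendsto_interpMoment_atTop hu hpos hp.le
    (not_integrable_rpow_neg_of_isBigO hu hpos hp hsp hV.2))

end InterpolatedMoment

section Torus

variable {u : ℝ × ℝ → ℝ} {q : ℝ × ℝ}

/-- The closed period square `[0, 2π]²`, over which `tavg` integrates. -/
abbrev periodSquare : Set (ℝ × ℝ) :=
  Icc 0 (2 * π) ×ˢ Icc 0 (2 * π)

/-- The normalised Lebesgue measure on the period square: the Haar measure of the torus,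
carried by a fundamental domain so that biperiodic functions need not be passed to a quotient. -/
noncomputable def torusMeasure : Measure (ℝ × ℝ) :=
  volume[|periodSquare]

theorem measurableSet_periodSquare : MeasurableSet periodSquare :=
  measurableSet_Icc.prod measurableSet_Icc

theorem volume_periodSquare : volume periodSquare = ENNReal.ofReal (4 * π ^ 2) := by
  rw [Measure.volume_eq_prod, Measure.prod_prod, Real.volume_Icc,
    ← ofReal_mul (by linarith [two_pi_pos])]
  ring_nf

instance : IsProbabilityMeasure torusMeasure :=
  cond_isProbabilityMeasure_of_finite
    (volume_periodSquare ▸ (ofReal_pos.mpr (by positivity)).ne')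
    (volume_periodSquare ▸ ofReal_ne_top)

theorem tavg_eq_integral_torusMeasure (f : ℝ × ℝ → ℝ) : tavg f = ∫ x, f x ∂torusMeasure := by
  rw [torusMeasure, ProbabilityTheory.cond, integral_smul_measure, volume_periodSquare, toReal_inv,
    toReal_ofReal (by positivity), tavg, smul_eq_mul, div_eq_inv_mul]

theorem torusMeasure_real (s : Set (ℝ × ℝ)) :
    torusMeasure.real s = (4 * π ^ 2)⁻¹ * volume.real (periodSquare ∩ s) := by
  rw [Measure.real, torusMeasure, cond_apply measurableSet_periodSquare, volume_periodSquare,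
    toReal_mul, toReal_inv, toReal_ofReal (by positivity), Measure.real]

theorem integrable_torusMeasure_of_continuous (hu : Continuous u) : Integrable u torusMeasure := by
  have hsquare : IsCompact periodSquare := isCompact_Icc.prod isCompact_Icc
  refine (hu.continuousOn.integrableOn_compact hsquare).smul_measure (inv_ne_top.mpr ?_)
  exact volume_periodSquare ▸ (ofReal_pos.mpr (by positivity)).ne'

theorem torusMeasure_closedBall_isBigO (q : ℝ × ℝ) :
    (fun r => torusMeasure.real (closedBall q r)) =O[𝓝[>] 0] fun r => r ^ (2 : ℝ) := by
  refine .of_bound ((4 * π ^ 2)⁻¹ * 4) (eventually_mem_nhdsWithin.mono fun r (hr : 0 < r) => ?_)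
  have hball : volume.real (closedBall q r) = 4 * r ^ 2 := by
    rw [← Prod.mk.eta (p := q), ← closedBall_prod_same, Measure.volume_eq_prod,
      measureReal_prod_prod, Real.volume_real_closedBall hr.le, Real.volume_real_closedBall hr.le]
    ring
  rw [norm_of_nonneg measureReal_nonneg, torusMeasure_real, Real.rpow_two,
    norm_of_nonneg (sq_nonneg r), mul_assoc, ← hball]
  gcongr
  · exact measure_closedBall_lt_top.ne
  · exact inter_subset_right

theorem rpow_isBigO_torusMeasure_closedBall (hq : q ∈ Ico (0 : ℝ) (2 * π) ×ˢ Ico (0 : ℝ) (2 * π)) :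
    (fun r => r ^ (2 : ℝ)) =O[𝓝[>] 0] fun r => torusMeasure.real (closedBall q r) := by
  refine .of_bound (4 * π ^ 2) ?_
  filter_upwards [Ioo_mem_nhdsGT (sub_pos.mpr hq.1.2), Ioo_mem_nhdsGT (sub_pos.mpr hq.2.2)]
    with r hr₁ hr₂
  have hcorner : Icc q.1 (q.1 + r) ×ˢ Icc q.2 (q.2 + r) ⊆ periodSquare ∩ closedBall q r := by
    refine subset_inter (prod_mono ?_ ?_) ?_
    · exact Icc_subset_Icc hq.1.1 (by linarith [hr₁.2])
    · exact Icc_subset_Icc hq.2.1 (by linarith [hr₂.2])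
    · rw [← Prod.mk.eta (p := q), ← closedBall_prod_same, Real.closedBall_eq_Icc,
        Real.closedBall_eq_Icc]
      exact prod_mono (Icc_subset_Icc_left (by linarith [hr₁.1]))
        (Icc_subset_Icc_left (by linarith [hr₁.1]))
  have hvol : volume.real (Icc q.1 (q.1 + r) ×ˢ Icc q.2 (q.2 + r)) = r ^ 2 := by
    rw [Measure.volume_eq_prod, measureReal_prod_prod]
    simp [hr₁.1.le, pow_two]
  rw [norm_of_nonneg measureReal_nonneg, torusMeasure_real, mul_inv_cancel_left₀ (by positivity),
    Real.rpow_two, norm_of_nonneg (sq_nonneg r), ← hvol]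
  exact measureReal_mono hcorner
    (measure_ne_top_of_subset inter_subset_left (volume_periodSquare ▸ ofReal_ne_top))

theorem exists_mem_Ico_prod_Ico_eq {α : Type*} {f : ℝ × ℝ → α} {c d : ℝ} (hc : 0 < c) (hd : 0 < d)
    (h₁ : ∀ y, Function.Periodic (fun x => f (x, y)) c)
    (h₂ : ∀ x, Function.Periodic (fun y => f (x, y)) d) (q : ℝ × ℝ) :
    ∃ q' ∈ Ico 0 c ×ˢ Ico 0 d, f q' = f q := by
  obtain ⟨x, hx, hfx⟩ := (h₁ q.2).exists_mem_Ico₀ hc q.1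
  obtain ⟨y, hy, hfy⟩ := (h₂ x).exists_mem_Ico₀ hd q.2
  exact ⟨(x, y), ⟨hx, hy⟩, (hfx.trans hfy).symm⟩

theorem dist_pow_isBigO_of_pos {X : Type*} [PseudoMetricSpace X] {u : X → ℝ} {q : X}
    (hu : ContinuousAt u q) (hq : 0 < u q) (k : ℕ) : (fun x => dist x q ^ k) =O[𝓝 q] u := by
  have hdist : (fun x => dist x q ^ k) =O[𝓝 q] fun _ => (1 : ℝ) :=
    (show ContinuousAt (fun x => dist x q ^ k) q by fun_prop).tendsto.isBigO_one ℝ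
  refine hdist.trans ((isBigO_const_left_iff_pos_le_norm one_ne_zero).mpr
    ⟨u q / 2, half_pos hq, ?_⟩)
  filter_upwards [hu.eventually_const_le (half_lt_self hq)] with x hx
  exact hx.trans (le_norm_self _)

theorem torusMeasure_sublevel_isTheta (hu : Continuous u) (hu0 : ∀ x, 0 ≤ u x)
    (h₁ : ∀ y, Function.Periodic (fun x => u (x, y)) (2 * π))
    (h₂ : ∀ x, Function.Periodic (fun y => u (x, y)) (2 * π)) (hex : ∃ q, u q = 0)
    (hzero : ∀ q, u q = 0 → u =Θ[𝓝 q] fun x => ‖x - q‖ ^ 2) :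
    (fun ε => torusMeasure.real {x | u x ≤ ε}) =Θ[𝓝[>] 0] fun ε => ε ^ (1 : ℝ) := by
  simp only [← dist_eq_norm] at hzero
  have hone : (1 : ℝ) = 2 / (2 : ℕ) := by norm_num
  rw [hone]
  constructor
  · have hgrowth (q : ℝ × ℝ) : (fun x => dist x q ^ 2) =O[𝓝 q] u := by
      rcases (hu0 q).eq_or_lt with hq | hq
      · exact (hzero q hq.symm).2
      · exact dist_pow_isBigO_of_pos hu.continuousAt hq 2
    have hcompact := isBigO_measureReal_sublevel_of_isCompact (isCompact_Icc.prod isCompact_Icc)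
      (K := periodSquare) hu0 two_ne_zero
      (fun q _ => torusMeasure_closedBall_isBigO q) fun q _ => hgrowth q
    simpa only [torusMeasure_real, ← inter_assoc, inter_self] using hcompact
  · obtain ⟨q₀, hq₀⟩ := hex
    obtain ⟨q, hq, hqq₀⟩ := exists_mem_Ico_prod_Ico_eq two_pi_pos two_pi_pos h₁ h₂ q₀
    exact rpow_isBigO_measureReal_sublevel two_ne_zero (rpow_isBigO_torusMeasure_closedBall hq)
      (hzero q (hqq₀.trans hq₀)).1

end Torus

section StretchingRate

variable {γ : ℝ × ℝ → ℝ} {p : ℝ × ℝ}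

theorem torusMeasure_sublevel_mul_sub_isTheta {c : ℝ} (hγ : Continuous γ)
    (h₁ : ∀ y, Function.Periodic (fun x => γ (x, y)) (2 * π))
    (h₂ : ∀ x, Function.Periodic (fun y => γ (x, y)) (2 * π)) (hmin : ∀ q, γ p ≤ γ q)
    (hgrowth : ∀ q, γ q = γ p → (fun x => γ x - γ p) =Θ[𝓝 q] fun x => ‖x - q‖ ^ 2) (hc : 0 < c) :
    (fun ε => torusMeasure.real {x | c * (γ x - γ p) ≤ ε}) =Θ[𝓝[>] 0] fun ε => ε ^ (1 : ℝ) := by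
  refine torusMeasure_sublevel_isTheta (by fun_prop)
    (fun x => mul_nonneg hc.le (sub_nonneg.mpr (hmin x)))
    (fun y x => by simp only [h₁ y x]) (fun x y => by simp only [h₂ x y]) ⟨p, by simp⟩
    fun q hq => ?_
  have hqp : γ q = γ p := by simpa [hc.ne', sub_eq_zero] using hq
  exact (hgrowth q hqp).const_mul_left hc.ne'

theorem apply_neg_of_tavg_eq_zero (hγ : Continuous γ) (hmean : tavg γ = 0)
    (h₁ : ∀ y, Function.Periodic (fun x => γ (x, y)) (2 * π))
    (h₂ : ∀ x, Function.Periodic (fun y => γ (x, y)) (2 * π)) (hmin : ∀ q, γ p ≤ γ q)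
    (hgrowth : ∀ q, γ q = γ p → (fun x => γ x - γ p) =Θ[𝓝 q] fun x => ‖x - q‖ ^ 2) : γ p < 0 := by
  have hlt : ∀ᵐ x ∂torusMeasure, 0 < 1 * (γ x - γ p) :=
    ae_pos_of_isBigO_measureReal_sublevel one_pos
      (torusMeasure_sublevel_mul_sub_isTheta hγ h₁ h₂ hmin hgrowth one_pos).1
  simp only [one_mul] at hlt
  have hint := integrable_torusMeasure_of_continuous hγ
  have hpos := integral_pos_of_ae_pos hlt (hint.sub (integrable_const _))
  rw [integral_sub hint (integrable_const _), ← tavg_eq_integral_torusMeasure, hmean] at hpos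
  simpa using hpos

theorem tavg_rpow_eq_interpMoment {a m S : ℝ} (hm : m ≠ 0) (hS : S = -1 / (a * m))
    (s : ℝ) : (tavg fun x => (1 + a * γ x * s) ^ (-1 / a)) =
      interpMoment torusMeasure (fun x => (-m)⁻¹ * (γ x - m)) a⁻¹ (s / S) := by
  have hbase (x : ℝ × ℝ) :
      1 + a * γ x * s = 1 - s / S + s / S * ((-m)⁻¹ * (γ x - m)) := by
    rw [hS]
    field_simp
    ring
  rw [tavg_eq_integral_torusMeasure, interpMoment, neg_div, one_div]
  simp only [hbase]

theorem tendsto_nhdsLT_of_eq_comp_div {α : Type*} {G F : ℝ → α} {S : ℝ} {l : Filter α} (hS : 0 < S)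
    (hG : ∀ s ∈ Ico 0 S, G s = F (s / S)) (hF : Tendsto F (𝓝[<] 1) l) :
    Tendsto G (𝓝[<] S) l := by
  have hdiv : Tendsto (fun s => s / S) (𝓝[<] S) (𝓝[<] 1) := by
    refine tendsto_nhdsWithin_iff.mpr
      ⟨?_, eventually_mem_nhdsWithin.mono fun s hs => (div_lt_one hS).mpr hs⟩
    exact ((continuous_id.div_const S).tendsto' S 1 (div_self hS.ne')).mono_left nhdsWithin_le_nhds
  refine (hF.comp hdiv).congr' ?_
  filter_upwards [Ico_mem_nhdsLT hS] with s hs using (hG s hs).symm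

theorem lintegral_ofReal_inv_lt_top_iff {G J : ℝ → ℝ} {S κ : ℝ} (hS : 0 < S)
    (hJ : ∀ t ∈ Ico (0 : ℝ) 1, 0 ≤ J t) (hG : ∀ s ∈ Ico 0 S, G s = J (s / S) ^ (-κ)) :
    ∫⁻ s in Ico 0 S, ENNReal.ofReal (G s)⁻¹ < ⊤ ↔
      ∫⁻ t in Ico (0 : ℝ) 1, ENNReal.ofReal (J t ^ κ) < ⊤ := by
  have hrescale : ∀ t ∈ Ico (0 : ℝ) 1,
      ENNReal.ofReal (G (S * t))⁻¹ = ENNReal.ofReal (J t ^ κ) := fun t ht => by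
    have hSt : S * t ∈ Ico 0 S := ⟨mul_nonneg hS.le ht.1, mul_lt_of_lt_one_right hS ht.2⟩
    rw [hG _ hSt, mul_div_cancel_left₀ t hS.ne', rpow_neg (hJ t ht), inv_inv]
  rw [lintegral_Ico_zero_eq_mul hS, setLIntegral_congr_fun measurableSet_Ico hrescale]
  exact ⟨fun h => lt_top_of_mul_ne_top_right h.ne (ofReal_pos.mpr hS).ne',
    mul_lt_top ofReal_lt_top⟩

theorem isTheta_sub_of_add_period {E : Type*} [NormedAddCommGroup E] {f : E → ℝ} {p c : E}
    (hc : Function.Periodic f c) (hf : (fun x => f x - f p) =Θ[𝓝 p] fun x => ‖x - p‖ ^ 2) :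
    (fun x => f x - f p) =Θ[𝓝 (p + c)] fun x => ‖x - (p + c)‖ ^ 2 := by
  have hsub : Tendsto (fun x => x - c) (𝓝 (p + c)) (𝓝 p) :=
    (continuous_id.sub continuous_const).tendsto' _ _ (add_sub_cancel_right p c)
  have hcomp : ((fun x => f x - f p) ∘ fun x => x - c) =Θ[𝓝 (p + c)]
      ((fun x => ‖x - p‖ ^ 2) ∘ fun x => x - c) :=
    ⟨hf.1.comp_tendsto hsub, hf.2.comp_tendsto hsub⟩
  simpa only [Function.comp_def, hc.sub_eq, sub_sub, add_comm c] using hcomp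

theorem periodic_prodMk_intCast_mul {α : Type*} {f : ℝ × ℝ → α} {c d : ℝ}
    (h₁ : ∀ y, Function.Periodic (fun x => f (x, y)) c)
    (h₂ : ∀ x, Function.Periodic (fun y => f (x, y)) d) (m n : ℤ) :
    Function.Periodic f (c * m, d * n) := fun x => by
  calc f (x.1 + c * m, x.2 + d * n) = f (x.1, x.2 + d * n) := by
        simpa only [mul_comm c] using (h₁ (x.2 + d * n)).int_mul m x.1
    _ = f x := by simpa only [mul_comm d] using (h₂ x.1).int_mul n x.2

theorem lintegral_interpMoment_inv_rpow_lt_top_iff {X : Type*} [MeasurableSpace X] {ν : Measure X}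
    [IsFiniteMeasure ν] {u : X → ℝ} {a : ℝ} (hu : Measurable u) (ha : 0 < a)
    (hV : (fun ε => ν.real {x | u x ≤ ε}) =Θ[𝓝[>] 0] fun ε => ε ^ (1 : ℝ)) :
    ∫⁻ t in Ico (0 : ℝ) 1, ENNReal.ofReal (interpMoment ν u a⁻¹ t ^ (2 * a)) < ⊤ ↔ 1 / 2 < a := by
  rw [lintegral_interpMoment_rpow_lt_top_iff hu one_pos (inv_nonneg.mpr ha.le) (by positivity) hV]
  have hexp : (a⁻¹ - 1) * (2 * a) = 2 - 2 * a := by field_simp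
  rw [hexp]
  constructor <;> intro h <;> linarith

theorem isTheta_sub_of_eq_of_hessian_pos {c d : ℝ}
    (hγ : ContDiffAt ℝ 2 γ p) (h₁ : ∀ y, Function.Periodic (fun x => γ (x, y)) c)
    (h₂ : ∀ x, Function.Periodic (fun y => γ (x, y)) d) (hmin : IsLocalMin γ p)
    (hunique : ∀ q, γ q = γ p → ∃ m n : ℤ, q = p + (c * m, d * n))
    (hpos : ∀ v, v ≠ 0 → 0 < fderiv ℝ (fun q => fderiv ℝ γ q v) p v) (q : ℝ × ℝ)
    (hq : γ q = γ p) : (fun x => γ x - γ p) =Θ[𝓝 q] fun x => ‖x - q‖ ^ 2 := by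
  obtain ⟨m, n, rfl⟩ := hunique q hq
  exact isTheta_sub_of_add_period (periodic_prodMk_intCast_mul h₁ h₂ m n)
    (isTheta_sub_of_isLocalMin_of_hessian_pos hγ hmin hpos)

end StretchingRate

theorem stmt19_general (lam : ℝ) (hlam : -1 < lam) (γ0 : ℝ × ℝ → ℝ) (hcont : Continuous γ0)
    (hper1 : ∀ y : ℝ, Function.Periodic (fun x => γ0 (x, y)) (2 * π))
    (hper2 : ∀ x : ℝ, Function.Periodic (fun y => γ0 (x, y)) (2 * π))
    (hmean : tavg γ0 = 0) (pmin : ℝ × ℝ) (hmin : ∀ q, γ0 pmin ≤ γ0 q)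
    (hgrowth : ∀ q, γ0 q = γ0 pmin → (fun x => γ0 x - γ0 pmin) =Θ[𝓝 q] fun x => ‖x - q‖ ^ 2)
    (Sstar : ℝ) (hSstar : Sstar = -1 / ((lam + 1) * γ0 pmin)) (G : ℝ → ℝ)
    (hG : ∀ s ∈ Ico 0 Sstar,
      G s = (tavg fun p => (1 + (lam + 1) * γ0 p * s) ^ (-1 / (lam + 1) : ℝ))
        ^ (-(2 * (lam + 1)) : ℝ))
    (Tstar : ℝ≥0∞) (hTstar : Tstar = ∫⁻ s in Ico (0 : ℝ) Sstar, ENNReal.ofReal (G s)⁻¹) :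
    (lam ≤ -1 / 2 → Tstar = ⊤ ∧ Tendsto G (𝓝[<] Sstar) (𝓝 0)) ∧
    (-1 / 2 < lam → lam ≤ 0 → Tstar < ⊤ ∧ Tendsto G (𝓝[<] Sstar) (𝓝 0)) ∧
    (0 < lam → (∃ L : ℝ, Tendsto G (𝓝[<] Sstar) (𝓝 L) ∧ 0 < L) ∧ Tstar < ⊤) := by
  have ha : 0 < lam + 1 := by linarith
  have hm : γ0 pmin < 0 := apply_neg_of_tavg_eq_zero hcont hmean hper1 hper2 hmin hgrowth
  have hS : 0 < Sstar := hSstar ▸ div_pos_of_neg_of_neg (by norm_num) (mul_neg_of_pos_of_neg ha hm)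
  have hc : 0 < (-γ0 pmin)⁻¹ := inv_pos.mpr (neg_pos.mpr hm)
  have hV := torusMeasure_sublevel_mul_sub_isTheta hcont hper1 hper2 hmin hgrowth hc
  set u : ℝ × ℝ → ℝ := fun x => (-γ0 pmin)⁻¹ * (γ0 x - γ0 pmin)
  have hu : Measurable u := by fun_prop
  have hu0 (x : ℝ × ℝ) : 0 ≤ u x := mul_nonneg hc.le (sub_nonneg.mpr (hmin x))
  have hGJ : ∀ s ∈ Ico 0 Sstar, G s =
      interpMoment torusMeasure u (lam + 1)⁻¹ (s / Sstar) ^ (-(2 * (lam + 1))) := fun s hs => by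
    rw [hG s hs, tavg_rpow_eq_interpMoment hm.ne hSstar]
  have hT : Tstar < ⊤ ↔ 1 / 2 < lam + 1 := by
    rw [hTstar, lintegral_ofReal_inv_lt_top_iff hS
      (fun t ht => interpMoment_nonneg (.of_forall hu0) ht) hGJ,
      lintegral_interpMoment_inv_rpow_lt_top_iff hu ha hV]
  have hzero (hlam0 : lam ≤ 0) : Tendsto G (𝓝[<] Sstar) (𝓝 0) :=
    tendsto_nhdsLT_of_eq_comp_div hS hGJ <| tendsto_interpMoment_rpow_neg hu one_pos
      ((one_le_inv₀ ha).mpr (by linarith)) (by positivity) hV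
  refine ⟨fun h => ⟨not_lt_top_iff.mp fun hlt => ?_, hzero (by linarith)⟩,
    fun h h0 => ⟨hT.mpr (by linarith), hzero h0⟩, fun h => ⟨?_, hT.mpr (by linarith)⟩⟩
  · linarith [hT.mp hlt]
  · obtain ⟨L, hL, hLpos⟩ := exists_pos_tendsto_interpMoment_rpow hu (inv_nonneg.mpr ha.le)
      (inv_lt_one_of_one_lt₀ (by linarith)) hV.1 (-(2 * (lam + 1)))
    exact ⟨L, tendsto_nhdsLT_of_eq_comp_div hS hGJ hL, hLpos⟩

end Development

/-- conditions on the singularity time for generic initial conditions and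
`λ > −1`. With `γ₀` C², biperiodic, mean-zero, not identically zero, attaining its minimum
(resp. maximum) at a unique point modulo periods with positive (resp. negative) definite
Hessian, `S* = −1/((λ+1)γ₋)` and `T* = ∫₀^{S*} G(s)⁻¹ ds`:
(i) if `−1 < λ ≤ −1/2` then `T* = ∞` and `G(S) → 0` as `S → S*⁻`;
(ii) if `−1/2 < λ ≤ 0` then `T* < ∞` and `G(S) → 0` as `S → S*⁻`;
(iii) if `λ > 0` then `lim_{S→S*⁻} G(S) > 0` and `T* < ∞`. -/
theorem stmt19 (lam : ℝ) (hlam : -1 < lam)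
    (γ0 : ℝ × ℝ → ℝ) (hsmooth : ContDiff ℝ 2 γ0)
    (hper1 : ∀ y : ℝ, Function.Periodic (fun x => γ0 (x, y)) (2*π))
    (hper2 : ∀ x : ℝ, Function.Periodic (fun y => γ0 (x, y)) (2*π))
    (hmean : tavg γ0 = 0) (hne : γ0 ≠ 0)
    (pmin pmax : ℝ × ℝ)
    (hmin : ∀ q : ℝ × ℝ, γ0 pmin ≤ γ0 q)
    (hminU : ∀ q : ℝ × ℝ, γ0 q = γ0 pmin →
      ∃ m n : ℤ, q = pmin + (2 * π * (m:ℝ), 2 * π * (n:ℝ)))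
    (hminH : ∀ v : ℝ × ℝ, v ≠ 0 → 0 < fderiv ℝ (fun q => fderiv ℝ γ0 q v) pmin v)
    (hmax : ∀ q : ℝ × ℝ, γ0 q ≤ γ0 pmax)
    (hmaxU : ∀ q : ℝ × ℝ, γ0 q = γ0 pmax →
      ∃ m n : ℤ, q = pmax + (2 * π * (m:ℝ), 2 * π * (n:ℝ)))
    (hmaxH : ∀ v : ℝ × ℝ, v ≠ 0 → fderiv ℝ (fun q => fderiv ℝ γ0 q v) pmax v < 0)
    (Sstar : ℝ) (hSstar : Sstar = -1 / ((lam + 1) * γ0 pmin))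
    (G : ℝ → ℝ)
    (hG : ∀ s ∈ Set.Ico 0 Sstar,
      G s = (tavg fun p => (1 + (lam + 1) * γ0 p * s) ^ (-1 / (lam + 1) : ℝ))
              ^ (-(2 * (lam + 1)) : ℝ))
    (Tstar : ℝ≥0∞)
    (hTstar : Tstar = ∫⁻ s in Set.Ico (0:ℝ) Sstar, ENNReal.ofReal ((G s)⁻¹)) :
    (lam ≤ -1/2 → Tstar = ⊤ ∧ Filter.Tendsto G (𝓝[<] Sstar) (𝓝 0)) ∧
    (-1/2 < lam → lam ≤ 0 → Tstar < ⊤ ∧ Filter.Tendsto G (𝓝[<] Sstar) (𝓝 0)) ∧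
    (0 < lam → (∃ L : ℝ, Filter.Tendsto G (𝓝[<] Sstar) (𝓝 L) ∧ 0 < L) ∧ Tstar < ⊤) :=
  stmt19_general lam hlam γ0 hsmooth.continuous hper1 hper2 hmean pmin hmin
    (isTheta_sub_of_eq_of_hessian_pos hsmooth.contDiffAt hper1 hper2 (.of_forall hmin) hminU hminH)
    Sstar hSstar G hG Tstar hTstar
end
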